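/- arXiv:2402.16549 — 4 statements merged into one kernel-verified Lean document; each statement's English description precedes it below -/
import Mathlib

section
/- Let (T, M) be a Noetherian local ring with M not an associated prime of T, and let P be a minimal prime ideal of T with dim(T/P) = n. Then there exists a saturated chain of prime ideals P ⊊ Q₁ ⊊ ⋯ ⊊ Q_{n−1} ⊊ M such that for each i, Qᵢ is not an associated prime of T and P is the only minimal prime ideal of T contained in Qᵢ. -/
lemma aux_map_lt {T : Type*} [CommRing T] {p a b : Ideal T} (hpa : p ≤ a) (hab : a < b) :
    a.map (Ideal.Quotient.mk p) < b.map (Ideal.Quotient.mk p) := by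
  refine lt_of_le_of_ne (Ideal.map_mono hab.le) fun h => hab.ne ?_
  rw [← Ideal.comap_map_mk hpa, h, Ideal.comap_map_mk (hpa.trans hab.le)]

lemma aux_map_prime {T : Type*} [CommRing T] {p a : Ideal T} (hpa : p ≤ a) (ha : a.IsPrime) :
    (a.map (Ideal.Quotient.mk p)).IsPrime :=
  Ideal.map_isPrime_of_surjective Ideal.Quotient.mk_surjective (Ideal.mk_ker.trans_le hpa)

lemma aux_krull {T : Type*} [CommRing T] [IsNoetherianRing T] {p m q : Ideal T} {x : T}
    (hp : p.IsPrime) (hm : m.IsPrime) (hpm : p < m) (hmq : m < q)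
    (hq : q ∈ (p ⊔ Ideal.span {x}).minimalPrimes) : False := by
  have h1 := Ideal.map_height_le_one_of_mem_minimalPrimes hq
  have hqp : q.IsPrime := hq.isPrime
  have := aux_map_prime le_rfl hp
  have := aux_map_prime hpm.le hm
  have := aux_map_prime (hpm.le.trans hmq.le) hqp
  have h2 := Ideal.height_add_one_le_of_lt_of_isPrime (aux_map_lt le_rfl hpm)
  have h3 := Ideal.height_add_one_le_of_lt_of_isPrime (aux_map_lt hpm.le hmq)
  have h4 : (1 : ℕ∞) + 1 ≤ 1 :=
    calc (1 : ℕ∞) + 1 ≤ (m.map (Ideal.Quotient.mk p)).height + 1 := by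
          gcongr
          exact le_trans (by simp) h2
      _ ≤ _ := h3
      _ ≤ 1 := h1
  exact absurd h4 (by norm_num)

/-- Between `p < q < r` one can find a prime avoiding a given element outside `p`. -/
lemma aux_avoid {T : Type*} [CommRing T] [IsNoetherianRing T] {p q r : Ideal T} {x : T}
    (hp : p.IsPrime) (hq : q.IsPrime) (hr : r.IsPrime) (hpq : p < q) (hqr : q < r)
    (hx : x ∉ p) : ∃ s : Ideal T, s.IsPrime ∧ p < s ∧ s < r ∧ x ∉ s := by
  by_cases hxr : x ∈ r
  swap
  · exact ⟨q, hq, hpq, hqr, fun h => hxr (hqr.le h)⟩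
  have hle : p ⊔ Ideal.span {x} ≤ r :=
    sup_le (hpq.le.trans hqr.le) ((Ideal.span_singleton_le_iff_mem _).2 hxr)
  have hfin := (p ⊔ Ideal.span {x}).finite_minimalPrimes_of_isNoetherianRing
  have hns : ¬ ((r : Set T) ⊆ ⋃ i ∈ (p ⊔ Ideal.span {x}).minimalPrimes, (i : Set T)) := by
    rw [Ideal.subset_union_prime_finite hfin ⊥ ⊥ (fun i hi _ _ => hi.isPrime)]
    rintro ⟨m, hm, hrm⟩
    exact aux_krull hp hq hpq (lt_of_lt_of_le hqr hrm) hm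
  obtain ⟨y, hyr, hy⟩ := Set.not_subset.1 hns
  have hy' : ∀ m ∈ (p ⊔ Ideal.span {x}).minimalPrimes, y ∉ m := by
    intro m hm hym
    exact hy (Set.mem_biUnion hm hym)
  have hle' : p ⊔ Ideal.span {y} ≤ r :=
    sup_le (hpq.le.trans hqr.le) ((Ideal.span_singleton_le_iff_mem _).2 hyr)
  obtain ⟨m0, hm0, -⟩ := Ideal.exists_minimalPrimes_le hle
  have hyp : y ∉ p := fun h => hy' m0 hm0 (le_sup_left.trans hm0.le h)
  obtain ⟨s, hs, hsr⟩ := Ideal.exists_minimalPrimes_le hle'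
  have hsp : s.IsPrime := hs.isPrime
  have hps : p ≤ s := le_sup_left.trans hs.le
  have hys : y ∈ s := hs.le (le_sup_right (a := p) (Ideal.mem_span_singleton_self y))
  have hxs : x ∉ s := by
    intro hxs
    obtain ⟨m, hm, hms⟩ := Ideal.exists_minimalPrimes_le
      (sup_le hps ((Ideal.span_singleton_le_iff_mem _).2 hxs))
    have hxm : x ∈ m := hm.le (le_sup_right (a := p) (Ideal.mem_span_singleton_self x))
    have hpm : p < m := lt_of_le_of_ne (le_sup_left.trans hm.le) (by rintro rfl; exact hx hxm)
    have hms' : m < s := lt_of_le_of_ne hms (by rintro rfl; exact hy' _ hm hys)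
    exact aux_krull hp hm.isPrime hpm hms' hs
  exact ⟨s, hsp, lt_of_le_of_ne hps (by rintro rfl; exact hyp hys),
    lt_of_le_of_ne hsr (by rintro rfl; exact hxs hxr), hxs⟩

lemma aux_avoid_finite {T : Type*} [CommRing T] [IsNoetherianRing T] {p q r : Ideal T}
    (hp : p.IsPrime) (hq : q.IsPrime) (hr : r.IsPrime) (hpq : p < q) (hqr : q < r)
    (S : Set (Ideal T)) (hS : S.Finite) (hSp : ∀ J ∈ S, ¬ J ≤ p) :
    ∃ s : Ideal T, s.IsPrime ∧ p < s ∧ s < r ∧ ∀ J ∈ S, ¬ J ≤ s := by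
  have h : ¬ (∏ J ∈ hS.toFinset, J) ≤ p := by
    rw [hp.prod_le]
    rintro ⟨J, hJ, hJp⟩
    exact hSp J (hS.mem_toFinset.1 hJ) hJp
  obtain ⟨x, hx, hxp⟩ := SetLike.not_le_iff_exists.1 h
  obtain ⟨s, hs, h1, h2, h3⟩ := aux_avoid hp hq hr hpq hqr hxp
  refine ⟨s, hs, h1, h2, fun J hJ hJs => h3 ?_⟩
  exact (hs.prod_le.2 ⟨J, hS.mem_toFinset.2 hJ, hJs⟩) hx

lemma aux_chain {T : Type*} [CommRing T] [IsNoetherianRing T] (P : Ideal T) (k : ℕ) :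
    ∀ f : ℕ → PrimeSpectrum T, (∀ i < k, f i < f (i + 1)) →
      (∀ P' ∈ minimalPrimes T, P' ≤ (f 0).asIdeal → P' = P) →
      ∃ g : ℕ → PrimeSpectrum T, g 0 = f 0 ∧ g k = f k ∧ (∀ i < k, g i < g (i + 1)) ∧
        ∀ i, 0 < i → i < k → (g i).asIdeal ∉ associatedPrimes T T ∧
          ∀ P' ∈ minimalPrimes T, P' ≤ (g i).asIdeal → P' = P := by
  induction k with
  | zero => exact fun f hf _ => ⟨f, rfl, rfl, hf, fun i h1 h2 => by omega⟩
  | succ k ih =>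
    intro f hf h0
    obtain rfl | ⟨k, rfl⟩ : k = 0 ∨ ∃ l, k = l + 1 := by
      cases k <;> simp
    · exact ⟨f, rfl, rfl, hf, fun i h1 h2 => by omega⟩
    obtain ⟨s, hs, h1, h2, h3⟩ := aux_avoid_finite (f 0).isPrime (f 1).isPrime (f 2).isPrime
      (hf 0 (by omega)) (hf 1 (by omega))
      {J | J ∈ associatedPrimes T T ∪ minimalPrimes T ∧ ¬ J ≤ (f 0).asIdeal}
      (((associatedPrimes.finite T T).union
        (minimalPrimes.finite_of_isNoetherianRing T)).subset fun J hJ => hJ.1)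
      (fun J hJ => hJ.2)
    have hmin : ∀ P' ∈ minimalPrimes T, P' ≤ s → P' = P := fun P' hP' hle =>
      h0 P' hP' (by
        by_contra hc
        exact h3 P' ⟨Or.inr hP', hc⟩ hle)
    have hass : s ∉ associatedPrimes T T := fun hc => h3 s ⟨Or.inl hc, h1.not_ge⟩ le_rfl
    obtain ⟨g, g0, gk, glt, gg⟩ := ih
      (fun i => match i with | 0 => ⟨s, hs⟩ | (i + 1) => f (i + 2)) (by
        rintro (_ | i) hi
        · exact h2
        · exact hf (i + 2) (by omega)) hmin
    refine ⟨fun i => match i with | 0 => f 0 | (i + 1) => g i, rfl, gk, ?_, ?_⟩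
    · rintro (_ | i) hi
      · change f 0 < g 0
        rw [g0]
        exact h1
      · exact glt i (by omega)
    · rintro (_ | _ | i) hi hi'
      · omega
      · change (g 0).asIdeal ∉ _ ∧ ∀ P' ∈ minimalPrimes T, P' ≤ (g 0).asIdeal → P' = P
        rw [g0]
        exact ⟨hass, hmin⟩
      · exact gg (i + 1) (by omega) (by omega)

lemma aux_coheight {α : Type*} [Preorder α] (f : ℕ → α) (n : ℕ) (hf : ∀ i < n, f i < f (i + 1))
    (a k : ℕ) (h : a + k ≤ n) : Order.coheight (f (a + k)) + k ≤ Order.coheight (f a) := by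
  induction k with
  | zero => simp
  | succ k ih =>
    refine le_trans ?_ (ih (by omega))
    have := Order.coheight_add_one_le (hf (a + k) (by omega))
    calc _ = Order.coheight (f (a + k + 1)) + 1 + k := by
          push_cast
          rw [add_assoc, add_comm (1 : ℕ∞)]
          rfl
      _ ≤ _ := by gcongr

/-- Small, Lemma 2.8. -/
theorem statement_1 (T : Type*) [CommRing T] [IsNoetherianRing T] [IsLocalRing T]
    (hM : IsLocalRing.maximalIdeal T ∉ associatedPrimes T T)
    (P : Ideal T) (hP : P ∈ minimalPrimes T) (n : ℕ)
    (hdim : ringKrullDim (T ⧸ P) = n) :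
    ∃ f : Fin (n + 1) → PrimeSpectrum T,
      (f 0).asIdeal = P ∧
      (f (Fin.last n)).asIdeal = IsLocalRing.maximalIdeal T ∧
      (∀ i : Fin n, f i.castSucc ⋖ f i.succ) ∧
      (∀ i : Fin (n + 1), i ≠ 0 → i ≠ Fin.last n →
        (f i).asIdeal ∉ associatedPrimes T T ∧
        ∀ P' ∈ minimalPrimes T, P' ≤ (f i).asIdeal → P' = P) := by
  have hPp : P.IsPrime := hP.isPrime
  let x : PrimeSpectrum T := ⟨P, hPp⟩
  have hx : Order.coheight x = n := by
    have h : PrimeSpectrum.zeroLocus (R := T) P = Set.Ici x := rfl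
    rw [ringKrullDim_quotient, h, ← Order.coheight_eq_krullDim_Ici] at hdim
    exact_mod_cast hdim
  obtain ⟨l, hl, rfl⟩ := Order.exists_series_of_coheight_eq_coe x hx
  have key : ∀ f : ℕ → PrimeSpectrum T, f 0 = x → (∀ i < l.length, f i < f (i + 1)) →
      ∀ i ≤ l.length, ∀ c : ℕ, c ≤ Order.coheight (f i) → c + i ≤ l.length := by
    intro f f0 hf i hi c hc
    have := aux_coheight f l.length hf 0 i (by omega)
    rw [f0, hx, zero_add] at this
    have h2 : ((c + i : ℕ) : ℕ∞) ≤ (l.length : ℕ∞) := by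
      push_cast
      exact le_trans (by gcongr) this
    exact_mod_cast h2
  let f0 : ℕ → PrimeSpectrum T := fun i => if h : i < l.length + 1 then l ⟨i, h⟩ else x
  have hf00 : f0 0 = x := by
    simp only [f0, Nat.zero_lt_succ, dif_pos]
    exact hl
  have hf0 : ∀ i < l.length, f0 i < f0 (i + 1) := by
    intro i hi
    have := l.step ⟨i, hi⟩
    simp only [f0, show i < l.length + 1 by omega, show i + 1 < l.length + 1 by omega, dif_pos]
    exact this
  obtain ⟨g, g0, -, glt, gg⟩ := aux_chain P l.length f0 hf0 (by
    intro P' hP' hle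
    rw [hf00] at hle
    exact le_antisymm hle (hP.2 ⟨hP'.isPrime, bot_le⟩ hle))
  rw [hf00] at g0
  refine ⟨fun i => g i, ?_, ?_, ?_, ?_⟩
  · simp [g0, x]
  · have hle := IsLocalRing.le_maximalIdeal (g l.length).isPrime.ne_top
    by_contra hc
    have hlt : g l.length < ⟨IsLocalRing.maximalIdeal T, inferInstance⟩ :=
      lt_of_le_of_ne hle fun h => hc (by simpa using congrArg PrimeSpectrum.asIdeal h)
    have h1 := Order.coheight_add_one_le hlt
    have := key g g0 glt l.length le_rfl 1 (le_trans (by simp) h1)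
    omega
  · intro i
    refine ⟨glt i i.2, fun q h1 h2 => ?_⟩
    have hi := i.2
    have e1 := Order.coheight_add_one_le h1
    have e2 := Order.coheight_add_one_le h2
    have e3 := aux_coheight g l.length glt (i + 1) (l.length - (i + 1)) (by omega)
    have := key g g0 glt i hi.le ((l.length - (i + 1)) + 1 + 1) (by
      push_cast
      refine le_trans ?_ e1
      gcongr
      refine le_trans ?_ e2
      gcongr
      exact le_trans (by simp) e3)
    omega
  · intro i h1 h2
    refine gg i (Nat.pos_of_ne_zero fun h => h1 (Fin.ext h)) ?_
    exact lt_of_le_of_ne (Nat.lt_succ_iff.1 i.2) fun h => h2 (Fin.ext h)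
end

section
/- Let (T, M) be a Noetherian local catenary ring with depth T ≥ 2, and let P₀ be a minimal prime ideal of T with dim(T/P₀) = n ≥ 3. Then there exist infinitely many prime ideals Q of T such that P₀ ⊆ Q, P₀ is the only minimal prime of T contained in Q, dim(T/Q) = 1, and Q is not contained in any prime P that is an associated prime of T or an associated prime of T/zT for some nonzero regular element z of T. -/
/-- A ring is catenary if for all primes `p ≤ q`, all saturated chains of primes
from `p` to `q` have the same length. -/
def IsCatenaryRing (T : Type*) [CommRing T] : Prop :=
  ∀ (p q : PrimeSpectrum T) (m n : ℕ)
    (f : Fin (m + 1) → PrimeSpectrum T) (g : Fin (n + 1) → PrimeSpectrum T),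
    (∀ i : Fin m, f i.castSucc ⋖ f i.succ) → (∀ i : Fin n, g i.castSucc ⋖ g i.succ) →
    f 0 = p → f (Fin.last m) = q → g 0 = p → g (Fin.last n) = q → m = n

/-- `depth T ≥ 2`: there is a regular sequence of length two in the maximal ideal. -/
def DepthGeTwo (T : Type*) [CommRing T] [IsLocalRing T] : Prop :=
  ∃ a b : T, a ∈ IsLocalRing.maximalIdeal T ∧ b ∈ IsLocalRing.maximalIdeal T ∧
    RingTheory.Sequence.IsRegular T [a, b]

lemma aux_two_le (d : WithBot ℕ∞) (h : ¬ d ≤ 1) : 2 ≤ d := by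
  induction d with
  | bot => exact absurd bot_le h
  | coe d =>
    have h1 : ¬ d ≤ 1 := fun h' => h (WithBot.coe_le_coe.2 h')
    have h2 : (2 : ℕ∞) ≤ d := by
      have := Order.add_one_le_of_lt (not_le.1 h1)
      rwa [one_add_one_eq_two] at this
    exact WithBot.coe_le_coe.2 h2

open IsLocalRing in
/-- Prime avoidance for the maximal ideal. -/
lemma aux_avoid_s2 {B : Type*} [CommRing B] [IsLocalRing B] (F : Set (Ideal B)) (hF : F.Finite)
    (hp : ∀ q ∈ F, q.IsPrime ∧ q ≠ maximalIdeal B) :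
    ∃ w ∈ maximalIdeal B, ∀ q ∈ F, w ∉ q := by
  by_contra! h
  obtain ⟨q, hq, hle⟩ := (Ideal.subset_union_prime_finite hF (f := id) 0 0
    (fun i hi _ _ => (hp i hi).1) (I := maximalIdeal B)).1 (by
      intro w hw
      obtain ⟨q, hq, hwq⟩ := h w hw
      exact Set.mem_iUnion₂_of_mem hq hwq)
  exact (hp q hq).2 (le_antisymm (le_maximalIdeal (hp q hq).1.ne_top) hle)

/-- In a domain, a prime of height at most one is minimal over any nonzero ideal inside it. -/
lemma aux_minimal {B : Type*} [CommRing B] [IsDomain B] [IsNoetherianRing B]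
    (R I : Ideal B) [R.IsPrime] (hR : R.height ≤ 1) (hI : I ≠ ⊥) (hIR : I ≤ R) :
    R ∈ I.minimalPrimes := by
  refine Ideal.mem_minimalPrimes_of_height_le hIR (hR.trans ?_)
  rw [Order.one_le_iff_ne_zero, Ne, Ideal.height_eq_zero_iff_eq_bot]
  exact hI

open IsLocalRing in
lemma aux_max_height {B : Type*} [CommRing B] [IsLocalRing B]
    (h : 2 ≤ ringKrullDim B) {q : Ideal B} (hq : q.height ≤ 1) : q ≠ maximalIdeal B := by
  rintro rfl
  rw [← maximalIdeal_height_eq_ringKrullDim] at h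
  have h2 : (2 : ℕ∞) ≤ (maximalIdeal B).height := WithBot.coe_le_coe.1 h
  exact absurd (h2.trans hq) (by norm_num)

open IsLocalRing in
lemma aux_S {B : Type*} [CommRing B] [IsDomain B] [IsNoetherianRing B] [IsLocalRing B]
    (h : 2 ≤ ringKrullDim B) (y : B) (hy : y ≠ 0) (F : Set (Ideal B)) (hF : F.Finite)
    (hp : ∀ q ∈ F, q.IsPrime ∧ q ≠ maximalIdeal B) :
    ∃ R : Ideal B, R.IsPrime ∧ y ∉ R ∧ ∀ q ∈ F, ¬ R ≤ q := by
  obtain ⟨w, hw, hav⟩ := aux_avoid_s2 (F ∪ (Ideal.span {y}).minimalPrimes)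
    (hF.union (Ideal.finite_minimalPrimes_of_isNoetherianRing B _)) (by
      rintro q (hq | hq)
      · exact hp q hq
      · exact ⟨hq.isPrime, aux_max_height h
          (Ideal.height_le_one_of_isPrincipal_of_mem_minimalPrimes _ q hq)⟩)
  obtain ⟨R, hR, -⟩ := Ideal.exists_minimalPrimes_le
    (I := Ideal.span {w}) (J := maximalIdeal B) (by simpa [Ideal.span_le] using hw)
  have hRp := hR.isPrime
  have hwR : w ∈ R := hR.1.2 (Ideal.mem_span_singleton_self w)
  refine ⟨R, hRp, fun hyR => ?_, fun q hq hle => hav q (Or.inl hq) (hle hwR)⟩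
  refine hav R (Or.inr (aux_minimal R _
    (Ideal.height_le_one_of_isPrincipal_of_mem_minimalPrimes _ R hR) ?_ ?_)) hwR
  · simpa using hy
  · simpa [Ideal.span_le] using hyR

open IsLocalRing in
/-- A prime maximal among those avoiding `y` has dimension one. -/
lemma aux_dim_one {T : Type*} [CommRing T] [IsNoetherianRing T] [IsLocalRing T]
    (Q : Ideal T) [Q.IsPrime] (y : T) (hym : y ∈ maximalIdeal T) (hy : y ∉ Q)
    (hmax : ∀ R : Ideal T, R.IsPrime → Q ≤ R → y ∉ R → R ≤ Q) :
    ringKrullDim (T ⧸ Q) = 1 := by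
  have : IsLocalRing (T ⧸ Q) :=
    .of_surjective' (Ideal.Quotient.mk Q) Ideal.Quotient.mk_surjective
  have hy0 : Ideal.Quotient.mk Q y ≠ 0 := by rwa [Ne, Ideal.Quotient.eq_zero_iff_mem]
  have hnf : ¬ IsField (T ⧸ Q) := by
    intro hf
    obtain ⟨z, hz⟩ := hf.mul_inv_cancel hy0
    obtain ⟨z, rfl⟩ := Ideal.Quotient.mk_surjective z
    rw [← map_mul, ← map_one (Ideal.Quotient.mk Q), Ideal.Quotient.eq] at hz
    have h1 : y * z - 1 ∈ maximalIdeal T := le_maximalIdeal (Ideal.IsPrime.ne_top ‹_›) hz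
    have h2 : (1 : T) ∈ maximalIdeal T := by
      have := sub_mem (Ideal.mul_mem_right z _ hym) h1
      rwa [sub_sub_cancel] at this
    exact (Ideal.ne_top_iff_one _).1 (maximalIdeal.isMaximal T).ne_top h2
  have hge : 1 ≤ ringKrullDim (T ⧸ Q) := by
    by_contra hlt
    have hle : ringKrullDim (T ⧸ Q) ≤ 0 := Order.le_of_lt_succ (not_le.1 hlt)
    have : Ring.KrullDimLE 0 (T ⧸ Q) := Ring.krullDimLE_iff.mpr hle
    exact hnf Ring.KrullDimLE.isField_of_isDomain
  refine le_antisymm ?_ hge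
  by_contra hlt
  have h2 : 2 ≤ ringKrullDim (T ⧸ Q) := aux_two_le _ hlt
  obtain ⟨R, hRp, hyR, hR⟩ := aux_S h2 _ hy0 {⊥} (Set.finite_singleton _) (by
    rintro q rfl
    exact ⟨Ideal.isPrime_bot, aux_max_height h2 (by simp)⟩)
  apply hR ⊥ rfl
  have hc := hmax (R.comap (Ideal.Quotient.mk Q)) inferInstance (by
    intro q hq
    rw [Ideal.mem_comap, Ideal.Quotient.eq_zero_iff_mem.2 hq]
    exact zero_mem _) hyR
  intro r hr
  obtain ⟨r, rfl⟩ := Ideal.Quotient.mk_surjective r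
  exact Ideal.Quotient.eq_zero_iff_mem.2 (hc hr)

open IsLocalRing in
lemma aux_infinite {T : Type*} [CommRing T] [IsNoetherianRing T] [IsLocalRing T]
    (P : Ideal T) [P.IsPrime] (hP : 2 ≤ ringKrullDim (T ⧸ P))
    (y : T) (hym : y ∈ maximalIdeal T) (hy : y ∉ P) :
    {Q : Ideal T | Q.IsPrime ∧ P ≤ Q ∧ y ∉ Q ∧ ringKrullDim (T ⧸ Q) = 1}.Infinite := by
  intro hfin
  have : IsLocalRing (T ⧸ P) :=
    .of_surjective' (Ideal.Quotient.mk P) Ideal.Quotient.mk_surjective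
  have hy0 : Ideal.Quotient.mk P y ≠ 0 := by rwa [Ne, Ideal.Quotient.eq_zero_iff_mem]
  have hcm : (maximalIdeal (T ⧸ P)).comap (Ideal.Quotient.mk P) = maximalIdeal T := by
    have := Ideal.comap_isMaximal_of_surjective (Ideal.Quotient.mk P)
      Ideal.Quotient.mk_surjective (K := maximalIdeal (T ⧸ P))
    exact eq_maximalIdeal this
  have hcmap : ∀ Q : Ideal T, P ≤ Q →
      (Q.map (Ideal.Quotient.mk P)).comap (Ideal.Quotient.mk P) = Q := by
    intro Q hPQ
    rw [Ideal.comap_map_of_surjective _ Ideal.Quotient.mk_surjective,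
      ← RingHom.ker_eq_comap_bot, Ideal.mk_ker, sup_eq_left.2 hPQ]
  obtain ⟨R, hRp, hyR, hR⟩ := aux_S hP _ hy0 _ (hfin.image (Ideal.map (Ideal.Quotient.mk P))) (by
    rintro _ ⟨Q, ⟨hQ, hPQ, hyQ, -⟩, rfl⟩
    refine ⟨Ideal.map_isPrime_of_surjective Ideal.Quotient.mk_surjective (by simpa), ?_⟩
    intro he
    have := hcmap Q hPQ
    rw [he, hcm] at this
    exact hyQ (this ▸ hym))
  have hPR : P ≤ R.comap (Ideal.Quotient.mk P) := by
    intro q hq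
    rw [Ideal.mem_comap, Ideal.Quotient.eq_zero_iff_mem.2 hq]
    exact zero_mem _
  obtain ⟨Q, ⟨hQp, hRQ, hyQ⟩, hmax⟩ := set_has_maximal_iff_noetherian.mpr
    (inferInstanceAs (IsNoetherian T T))
    {Q : Ideal T | Q.IsPrime ∧ R.comap (Ideal.Quotient.mk P) ≤ Q ∧ y ∉ Q}
    ⟨_, inferInstance, le_rfl, hyR⟩
  have hQ1 := aux_dim_one Q y hym hyQ (fun R' hR' hle hyR' => by
    by_contra hn
    exact hmax R' ⟨hR', hRQ.trans hle, hyR'⟩ (lt_of_le_not_ge hle hn))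
  refine hR _ ⟨Q, ⟨hQp, hPR.trans hRQ, hyQ, hQ1⟩, rfl⟩ ?_
  rw [← Ideal.map_comap_of_surjective _ Ideal.Quotient.mk_surjective R]
  exact Ideal.map_mono hRQ

lemma aux_ass {T : Type*} [CommRing T] [IsNoetherianRing T] (z : T) (P : Ideal T) :
    P ∈ associatedPrimes T (T ⧸ Ideal.span {z}) ↔
      P.IsPrime ∧ ∃ t : T, ∀ q, q ∈ P ↔ z ∣ q * t := by
  rw [AssociatedPrimes.mem_iff, isAssociatedPrime_iff]
  refine and_congr_right fun _ => ?_
  rw [Ideal.Quotient.mk_surjective.exists]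
  refine exists_congr fun t => ?_
  rw [SetLike.ext_iff]
  refine forall_congr' fun q => ?_
  rw [Submodule.mem_colon_singleton, Submodule.mem_bot, Algebra.smul_def,
    Ideal.Quotient.algebraMap_eq, ← map_mul, Ideal.Quotient.eq_zero_iff_mem,
    Ideal.mem_span_singleton]

/-- Associated primes of principal regular quotients do not depend on the regular element. -/
lemma aux_ass_change {T : Type*} [CommRing T] [IsNoetherianRing T] (z x : T) (P : Ideal T)
    (hz : z ∈ nonZeroDivisors T) (hx : x ∈ nonZeroDivisors T) (hxP : x ∈ P)
    (h : P ∈ associatedPrimes T (T ⧸ Ideal.span {z})) :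
    P ∈ associatedPrimes T (T ⧸ Ideal.span {x}) := by
  rw [aux_ass] at h ⊢
  obtain ⟨hp, t, ht⟩ := h
  obtain ⟨u, hu⟩ := (ht x).1 hxP
  refine ⟨hp, u, fun q => (ht q).trans ⟨?_, ?_⟩⟩
  · rintro ⟨s, hs⟩
    refine ⟨s, (mul_cancel_left_mem_nonZeroDivisors hz).1 ?_⟩
    linear_combination (-q) * hu + x * hs
  · rintro ⟨s, hs⟩
    refine ⟨s, (mul_cancel_left_mem_nonZeroDivisors hx).1 ?_⟩
    linear_combination q * hu + z * hs

open IsLocalRing in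
lemma aux_depth {T : Type*} [CommRing T] [IsNoetherianRing T] [IsLocalRing T]
    (hd : DepthGeTwo T) :
    (∃ a ∈ maximalIdeal T, a ∈ nonZeroDivisors T) ∧
    ∀ z ∈ nonZeroDivisors T, maximalIdeal T ∉ associatedPrimes T (T ⧸ Ideal.span {z}) := by
  obtain ⟨a, b, ha, hb, hreg⟩ := hd
  have h1 := hreg.toIsWeaklyRegular
  rw [RingTheory.Sequence.isWeaklyRegular_cons_iff,
    RingTheory.Sequence.isWeaklyRegular_singleton_iff] at h1
  obtain ⟨hareg, hbreg⟩ := h1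
  have ha0 : a ∈ nonZeroDivisors T := by
    rw [mem_nonZeroDivisors_iff_right]
    intro x hx
    apply hareg
    simp only [smul_eq_mul, mul_zero]
    rw [mul_comm, hx]
  have hb' : ∀ u, a ∣ b * u → a ∣ u := by
    intro u hu
    have key : ∀ v : T, (Submodule.Quotient.mk v : QuotSMulTop a T) = 0 ↔ a ∣ v := by
      intro v
      rw [Submodule.Quotient.mk_eq_zero, Submodule.mem_smul_pointwise_iff_exists]
      constructor
      · rintro ⟨w, -, hw⟩
        exact ⟨w, hw.symm⟩
      · rintro ⟨w, hw⟩
        exact ⟨w, trivial, hw.symm⟩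
    rw [← key]
    apply hbreg
    simp only [smul_zero]
    rw [← Submodule.Quotient.mk_smul, smul_eq_mul, key]
    exact hu
  refine ⟨⟨a, ha, ha0⟩, fun z hz h => ?_⟩
  rw [aux_ass] at h
  obtain ⟨hp, t, ht⟩ := h
  obtain ⟨u, hu⟩ := (ht a).1 ha
  obtain ⟨v, hv⟩ := (ht b).1 hb
  obtain ⟨u', hu'⟩ := hb' u ⟨v, (mul_cancel_left_mem_nonZeroDivisors hz).1
    (by linear_combination (-b) * hu + a * hv)⟩
  have : t = z * u' := (mul_cancel_left_mem_nonZeroDivisors ha0).1 (by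
    rw [hu, hu']; ring)
  apply (Ideal.ne_top_iff_one _).1 hp.ne_top
  rw [ht]
  exact ⟨u', by rw [one_mul, this]⟩

open IsLocalRing in
/-- Some minimal prime of a quotient carries a chain of length two. -/
lemma aux_exists_min {A : Type*} [CommRing A] (I : Ideal A) (h : 2 ≤ ringKrullDim (A ⧸ I)) :
    ∃ P ∈ I.minimalPrimes, 2 ≤ ringKrullDim (A ⧸ P) := by
  rw [ringKrullDim_quotient] at h
  obtain ⟨l, hl⟩ := (Order.le_krullDim_iff (n := 2)).1 (by exact_mod_cast h)
  obtain ⟨P, hP, hle⟩ := Ideal.exists_minimalPrimes_le (I := I) (J := l.head.1.asIdeal) l.head.2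
  refine ⟨P, hP, ?_⟩
  rw [ringKrullDim_quotient]
  refine (Order.le_krullDim_iff (n := 2)).2 ⟨⟨l.length, fun i => ⟨(l i).1, ?_⟩, ?_⟩, hl⟩
  · exact hle.trans (show l.head ≤ l i from l.head_le i)
  · intro i
    exact l.step i

theorem statement_2 (T : Type*) [CommRing T] [IsNoetherianRing T] [IsLocalRing T]
    (hcat : IsCatenaryRing T) (hdepth : DepthGeTwo T)
    (P₀ : Ideal T) (hP₀ : P₀ ∈ minimalPrimes T) (n : ℕ) (hn : 3 ≤ n)
    (hdim : ringKrullDim (T ⧸ P₀) = n) :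
    {Q : Ideal T | Q.IsPrime ∧ P₀ ≤ Q ∧
      (∀ P' ∈ minimalPrimes T, P' ≤ Q → P' = P₀) ∧
      ringKrullDim (T ⧸ Q) = 1 ∧
      (∀ P : Ideal T,
        (P ∈ associatedPrimes T T ∨
          ∃ z : T, z ≠ 0 ∧ z ∈ nonZeroDivisors T ∧
            P ∈ associatedPrimes T (T ⧸ Ideal.span {z})) → ¬ Q ≤ P)}.Infinite := by
  classical
  obtain ⟨⟨a, ha, ha0⟩, hM⟩ := aux_depth hdepth
  have hP₀p : P₀.IsPrime := hP₀.isPrime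
  have hloc : IsLocalRing (T ⧸ P₀) :=
    .of_surjective' (Ideal.Quotient.mk P₀) Ideal.Quotient.mk_surjective
  have hminfin : (minimalPrimes T).Finite := minimalPrimes.finite_of_isNoetherianRing T
  have hregular : ∀ r : T, r ∈ nonZeroDivisors T ↔ ∀ p ∈ associatedPrimes T T, r ∉ p := by
    intro r
    have := Set.ext_iff.1 (biUnion_associatedPrimes_eq_compl_nonZeroDivisors T) r
    simp only [Set.mem_iUnion, SetLike.mem_coe, Set.mem_compl_iff, exists_prop] at this
    rw [← not_iff_not, ← this]
    push Not
    rfl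
  -- the element `x`
  let G : Set (Ideal T) := ⋃ P' ∈ minimalPrimes T,
    Ideal.comap (Ideal.Quotient.mk P₀) '' (P'.map (Ideal.Quotient.mk P₀)).minimalPrimes
  have hGfin : G.Finite := hminfin.biUnion fun P' _ =>
    (Ideal.finite_minimalPrimes_of_isNoetherianRing _ _).image _
  obtain ⟨x, hxm, hxav⟩ := aux_avoid_s2
    (associatedPrimes T T ∪ (G \ {IsLocalRing.maximalIdeal T}))
    ((associatedPrimes.finite T T).union (hGfin.subset Set.sdiff_subset)) (by
      rintro q (hq | ⟨hq, hne⟩)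
      · refine ⟨hq.isPrime, ?_⟩
        rintro rfl
        exact (hregular a).1 ha0 _ hq ha
      · refine ⟨?_, hne⟩
        simp only [G, Set.mem_iUnion] at hq
        obtain ⟨P', hP', R, hR, rfl⟩ := hq
        have := hR.isPrime
        infer_instance)
  have hxreg : x ∈ nonZeroDivisors T := (hregular x).2 fun p hp => hxav p (Or.inl hp)
  have hxP₀ : x ∉ P₀ := fun hx =>
    Set.disjoint_left.1 (Ideal.disjoint_nonZeroDivisors_of_mem_minimalPrimes hP₀) hx hxreg
  have hx0 : Ideal.Quotient.mk P₀ x ≠ 0 := by rwa [Ne, Ideal.Quotient.eq_zero_iff_mem]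
  have hcm : (IsLocalRing.maximalIdeal (T ⧸ P₀)).comap (Ideal.Quotient.mk P₀)
      = IsLocalRing.maximalIdeal T := by
    have := Ideal.comap_isMaximal_of_surjective (Ideal.Quotient.mk P₀)
      Ideal.Quotient.mk_surjective (K := IsLocalRing.maximalIdeal (T ⧸ P₀))
    exact IsLocalRing.eq_maximalIdeal this
  have hdimx := ringKrullDim_quotient_span_singleton_succ_eq_ringKrullDim_of_mem_nonZeroDivisors
    (mem_nonZeroDivisors_of_ne_zero hx0) (by rw [← Ideal.mem_comap, hcm]; exact hxm)
  have hdimx2 : 2 ≤ ringKrullDim ((T ⧸ P₀) ⧸ Ideal.span {Ideal.Quotient.mk P₀ x}) := by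
    rw [hdim] at hdimx
    by_contra hlt
    have hle : ringKrullDim ((T ⧸ P₀) ⧸ Ideal.span {Ideal.Quotient.mk P₀ x}) ≤ 1 :=
      not_not.1 fun h' => hlt (aux_two_le _ h')
    have h3 : (n : WithBot ℕ∞) ≤ 1 + 1 := hdimx ▸ add_le_add_left hle 1
    have h4 : n ≤ 1 + 1 := by exact_mod_cast h3
    omega
  obtain ⟨R, hR, hRdim⟩ := aux_exists_min _ hdimx2
  have hRp : R.IsPrime := hR.isPrime
  have hRht := Ideal.height_le_one_of_isPrincipal_of_mem_minimalPrimes _ R hR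
  set P := R.comap (Ideal.Quotient.mk P₀) with hPdef
  have hPp : P.IsPrime := inferInstance
  have hxP : x ∈ P := hR.1.2 (Ideal.mem_span_singleton_self _)
  have hP₀P : P₀ ≤ P := by
    intro q hq
    rw [hPdef, Ideal.mem_comap, Ideal.Quotient.eq_zero_iff_mem.2 hq]
    exact zero_mem _
  have hPdim : 2 ≤ ringKrullDim (T ⧸ P) := by
    refine hRdim.trans (le_of_eq ?_)
    have hs : Function.Surjective ((Ideal.Quotient.mk R).comp (Ideal.Quotient.mk P₀)) :=
      Ideal.Quotient.mk_surjective.comp Ideal.Quotient.mk_surjective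
    have hk : RingHom.ker ((Ideal.Quotient.mk R).comp (Ideal.Quotient.mk P₀)) = P := by
      rw [← RingHom.comap_ker, Ideal.mk_ker]
    exact (ringKrullDim_eq_of_ringEquiv
      ((Ideal.quotEquivOfEq hk.symm).trans (RingHom.quotientKerEquivOfSurjective hs))).symm
  have hPM : P ≠ IsLocalRing.maximalIdeal T := by
    intro he
    have hf : ringKrullDim (T ⧸ P) = 0 := by
      have : P.IsMaximal := he ▸ IsLocalRing.maximalIdeal.isMaximal T
      exact ringKrullDim_eq_zero_of_isField
        ((Ideal.Quotient.maximal_ideal_iff_isField_quotient P).1 this)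
    rw [hf] at hPdim
    exact absurd hPdim (by norm_num)
  have hPmin : ∀ P' ∈ minimalPrimes T, P' ≤ P → P' = P₀ := by
    intro P' hP' hle
    by_contra hne
    refine hxav P (Or.inr ⟨?_, hPM⟩) hxP
    simp only [G, Set.mem_iUnion]
    refine ⟨P', hP', R, aux_minimal R _ hRht ?_ (Ideal.map_le_iff_le_comap.2 hle), rfl⟩
    intro hbot
    rw [Ideal.map_eq_bot_iff_le_ker, Ideal.mk_ker] at hbot
    exact hne (le_antisymm hbot (hP₀.2 ⟨hP'.isPrime, bot_le⟩ hbot))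
  -- the element `y`
  obtain ⟨y, hyall, hyP⟩ : ∃ y ∈ (insert (IsLocalRing.maximalIdeal T)
      (hminfin.toFinset.erase P₀)).inf id, y ∉ P := by
    apply SetLike.not_le_iff_exists.1
    rw [hPp.inf_le']
    rintro ⟨I, hI, hle⟩
    rw [Finset.mem_insert, Finset.mem_erase, Set.Finite.mem_toFinset] at hI
    rcases hI with rfl | ⟨hne, hI⟩
    · exact hPM (le_antisymm (IsLocalRing.le_maximalIdeal hPp.ne_top) hle)
    · exact hne (hPmin I hI hle)
  have hymem : ∀ I ∈ insert (IsLocalRing.maximalIdeal T) (hminfin.toFinset.erase P₀), y ∈ I :=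
    fun I hI => (Finset.inf_le (f := id) hI : _ ≤ I) hyall
  have hinf := aux_infinite P hPdim y (hymem _ (Finset.mem_insert_self _ _)) hyP
  refine (hinf.sdiff (associatedPrimes.finite T (T ⧸ Ideal.span {x}))).mono ?_
  rintro Q ⟨⟨hQp, hPQ, hyQ, hQ1⟩, hQx⟩
  refine ⟨hQp, hP₀P.trans hPQ, ?_, hQ1, ?_⟩
  · intro P' hP' hle
    by_contra hne
    exact hyQ (hle (hymem P' (by simp [hne, hP'])))
  · intro p hp hQp'
    have hpp : p.IsPrime := by
      rcases hp with hp | ⟨z, -, -, hp⟩ <;> exact hp.isPrime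
    have hxp : x ∈ p := hQp' (hPQ hxP)
    rcases hp with hp | ⟨z, -, hz, hp⟩
    · exact (hregular x).1 hxreg p hp hxp
    · have hpx := aux_ass_change z x p hz hxreg hxp hp
      rcases eq_or_ne p Q with rfl | hne
      · exact hQx hpx
      · have hK : Ring.KrullDimLE 1 (T ⧸ Q) := Ring.krullDimLE_iff.mpr (by simp [hQ1])
        have hmp : (p.map (Ideal.Quotient.mk Q)).IsPrime :=
          Ideal.map_isPrime_of_surjective Ideal.Quotient.mk_surjective (by simpa)
        have hmax := hmp.isMaximal_of_ne_bot (by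
          intro hbot
          rw [Ideal.map_eq_bot_iff_le_ker, Ideal.mk_ker] at hbot
          exact hne (le_antisymm hbot hQp'))
        have hcomap := Ideal.comap_isMaximal_of_surjective (Ideal.Quotient.mk Q)
          Ideal.Quotient.mk_surjective (K := p.map (Ideal.Quotient.mk Q))
        rw [Ideal.comap_map_of_surjective _ Ideal.Quotient.mk_surjective,
          ← RingHom.ker_eq_comap_bot, Ideal.mk_ker, sup_eq_left.2 hQp'] at hcomap
        rw [IsLocalRing.eq_maximalIdeal hcomap] at hp
        exact hM z hz hp
end

section
/- Let T = ℚ[[x,y,z,w,t]]/((x) ∩ (y,z)) and let a be a nonzero regular element of T. Suppose the ideal (a, x) has a minimal prime P₁ not containing (y,z), and the ideal (a,y,z) has a minimal prime P₂ not containing (x). Then there exist prime ideals Q₁ and Q₂ of T such that for i = 1, 2: Pᵢ ⊊ Qᵢ, Qᵢ contains exactly one minimal prime ideal of T, and dim(T/Qᵢ) = 1. -/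
noncomputable section

/-- The power series ring `ℚ[[x,y,z,w,t]]`. -/
abbrev PS : Type := MvPowerSeries (Fin 5) ℚ

/-- The variables `x, y, z, w, t`. -/
def V (i : Fin 5) : PS := MvPowerSeries.X i

/-- The ideal `(x) ∩ (y, z)` of `ℚ[[x,y,z,w,t]]`. -/
def K : Ideal PS := Ideal.span {V 0} ⊓ Ideal.span {V 1, V 2}

/-- The ring `T = ℚ[[x,y,z,w,t]]/((x) ∩ (y,z))`. -/
abbrev T : Type := PS ⧸ K

/-- The image of `x` in `T`. -/
def xT : T := Ideal.Quotient.mk K (V 0)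
/-- The image of `y` in `T`. -/
def yT : T := Ideal.Quotient.mk K (V 1)
/-- The image of `z` in `T`. -/
def zT : T := Ideal.Quotient.mk K (V 2)


section helpers
open IsLocalRing

/-- `a` is regular modulo `J`. -/
def RegMod {R : Type*} [CommRing R] (J : Ideal R) (a : R) : Prop := ∀ u, a * u ∈ J → u ∈ J

/-- The maximal ideal is associated to `R/J`. -/
def SocMod {R : Type*} [CommRing R] [IsLocalRing R] (J : Ideal R) : Prop :=
  ∃ v, v ∉ J ∧ ∀ r ∈ maximalIdeal R, r * v ∈ J

lemma soc_exchange {R : Type*} [CommRing R] [IsLocalRing R] (J : Ideal R) (a b : R)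
    (hb : b ∈ maximalIdeal R) (ha' : RegMod J a) (hb' : RegMod J b)
    (h : SocMod (Ideal.span {a} ⊔ J)) : SocMod (Ideal.span {b} ⊔ J) := by
  obtain ⟨v, hv, hm⟩ := h
  obtain ⟨n, j, hj, hn⟩ := Ideal.mem_span_singleton_sup.1 (hm b hb)
  refine ⟨n, fun hcon => hv ?_, fun r hr => ?_⟩
  · obtain ⟨n', j', hj', hn'⟩ := Ideal.mem_span_singleton_sup.1 hcon
    refine Ideal.mem_span_singleton_sup.2 ⟨n', v - n' * a, hb' _ ?_, by ring⟩
    have : b * (v - n' * a) = j' * a + j := by rw [mul_sub, ← hn, ← hn']; ring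
    rw [this]
    exact J.add_mem (J.mul_mem_right _ hj') hj
  · obtain ⟨k, j', hj', hk⟩ := Ideal.mem_span_singleton_sup.1 (hm r hr)
    refine Ideal.mem_span_singleton_sup.2 ⟨k, r * n - k * b, ha' _ ?_, by ring⟩
    have : a * (r * n - k * b) = b * j' - r * j := by
      linear_combination r * hn - b * hk
    rw [this]
    exact J.sub_mem (J.mul_mem_left _ hj') (J.mul_mem_left _ hj)

lemma assoc_form {R : Type*} [CommRing R] [IsNoetherianRing R] (I Q : Ideal R)
    (hQ : Q ∈ associatedPrimes R (R ⧸ I)) : Q.IsPrime ∧ ∃ v, ∀ r, r ∈ Q ↔ r * v ∈ I := by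
  obtain ⟨h1, x, hx⟩ := isAssociatedPrime_iff.1 hQ
  refine ⟨h1, ?_⟩
  obtain ⟨v, rfl⟩ := Ideal.Quotient.mk_surjective x
  refine ⟨v, fun r => ?_⟩
  rw [hx, Submodule.mem_colon_singleton, Submodule.mem_bot, ← Ideal.Quotient.eq_zero_iff_mem]
  rfl

lemma exists_assoc {R : Type*} [CommRing R] [IsNoetherianRing R] (I : Ideal R) (u : R)
    (hu : u ∉ I) : ∃ Q ∈ associatedPrimes R (R ⧸ I), ∀ r, r * u ∈ I → r ∈ Q := by
  obtain ⟨P, hP, hle⟩ := exists_le_isAssociatedPrime_of_isNoetherianRing R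
    (Ideal.Quotient.mk I u) (by rwa [Ne, Ideal.Quotient.eq_zero_iff_mem])
  refine ⟨P, hP, fun r hr => hle ?_⟩
  rw [Submodule.mem_colon_singleton, Submodule.mem_bot]
  exact Ideal.Quotient.eq_zero_iff_mem.2 hr

lemma soc_of_assoc {R : Type*} [CommRing R] [IsNoetherianRing R] [IsLocalRing R] (I : Ideal R)
    (h : maximalIdeal R ∈ associatedPrimes R (R ⧸ I)) : SocMod I := by
  obtain ⟨h1, v, hv⟩ := assoc_form _ _ h
  exact ⟨v, fun h => h1.ne_top ((Ideal.eq_top_iff_one _).2 ((hv 1).2 (by simpa))),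
    fun r hr => (hv r).1 hr⟩

/-- In a local domain with a regular sequence of length 3, a minimal prime of a nonzero element
is not of coheight at most one. -/
lemma exists_prime_between {R : Type*} [CommRing R] [IsNoetherianRing R] [IsLocalRing R] [IsDomain R]
    (p₁ p₂ p₃ : R) (h1 : p₁ ∈ maximalIdeal R) (h2 : p₂ ∈ maximalIdeal R)
    (h3 : p₃ ∈ maximalIdeal R) (h0 : p₁ ≠ 0) (hp1 : (Ideal.span {p₁}).IsPrime)
    (hp2 : p₂ ∉ Ideal.span {p₁}) (hp12 : (Ideal.span {p₂} ⊔ Ideal.span {p₁}).IsPrime)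
    (hp3 : p₃ ∉ Ideal.span {p₂} ⊔ Ideal.span {p₁})
    (f : R) (hf : f ≠ 0) (P : Ideal R) (hP : P ∈ (Ideal.span {f}).minimalPrimes) :
    ∃ Q : Ideal R, Q.IsPrime ∧ P < Q ∧ Q < maximalIdeal R := by
  have hPp : P.IsPrime := hP.1.1
  have hfP : f ∈ P := hP.1.2 (Ideal.mem_span_singleton_self f)
  have hfm : f ∈ maximalIdeal R := le_maximalIdeal hPp.ne_top hfP
  have reg0 : ∀ a : R, a ≠ 0 → RegMod (⊥ : Ideal R) a := by
    intro a ha u hu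
    simpa [ha] using hu
  have s1 : ¬ SocMod (Ideal.span {f}) := by
    intro h
    have := soc_exchange ⊥ f p₁ h1 (reg0 _ hf) (reg0 _ h0) (by simpa using h)
    rw [sup_bot_eq] at this
    obtain ⟨v, hv, hm⟩ := this
    exact (hp1.mem_or_mem (hm _ h2)).elim hp2 hv
  -- choose g
  obtain ⟨g, hgm, hg1, hgA⟩ : ∃ g ∈ maximalIdeal R, g ∉ Ideal.span {p₁} ∧
      ∀ Q ∈ associatedPrimes R (R ⧸ Ideal.span {f}), g ∉ Q := by
    by_contra hcon
    push Not at hcon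
    have hfin : (insert (Ideal.span {p₁}) (associatedPrimes R (R ⧸ Ideal.span {f}))).Finite :=
      (associatedPrimes.finite R (R ⧸ Ideal.span {f})).insert _
    have := (Ideal.subset_union_prime_finite (R := R) hfin (f := id) ⊥ ⊥ (I := maximalIdeal R)
      (by
        intro i hi _ _
        rcases hi with rfl | hi
        · exact hp1
        · exact (assoc_form _ _ hi).1)).1 (by
        intro g hg
        by_cases hg1 : g ∈ Ideal.span {p₁}
        · simp only [Set.mem_iUnion]
          exact ⟨_, Set.mem_insert _ _, hg1⟩
        · obtain ⟨Q, hQ, hgQ⟩ := hcon g hg hg1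
          simp only [Set.mem_iUnion]
          exact ⟨Q, Set.mem_insert_of_mem _ hQ, hgQ⟩)
    obtain ⟨Q, hQ, hle⟩ := this
    rcases hQ with rfl | hQ
    · exact hp2 (hle h2)
    · have : maximalIdeal R = Q :=
        (maximalIdeal.isMaximal R).eq_of_le (assoc_form _ _ hQ).1.ne_top hle
      exact s1 (soc_of_assoc _ (this ▸ hQ))
  have hg0 : g ≠ 0 := by rintro rfl; exact hg1 (zero_mem _)
  have rgf : RegMod (Ideal.span {f}) g := by
    intro u hu
    by_contra hcon
    obtain ⟨Q, hQ, h⟩ := exists_assoc _ u hcon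
    exact hgA Q hQ (h g hu)
  have rg1 : RegMod (Ideal.span {p₁}) g := fun u hu => (hp1.mem_or_mem hu).resolve_left hg1
  have swap : ∀ a b : R, a ≠ 0 → RegMod (Ideal.span {a}) b → RegMod (Ideal.span {b}) a := by
    intro a b ha h u hu
    obtain ⟨v, hv⟩ := Ideal.mem_span_singleton'.1 hu
    obtain ⟨w, hw⟩ := Ideal.mem_span_singleton'.1
      (h v (Ideal.mem_span_singleton'.2 ⟨u, by rw [mul_comm u, ← hv, mul_comm]⟩))
    refine Ideal.mem_span_singleton'.2 ⟨w, mul_left_cancel₀ ha ?_⟩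
    rw [← hv, ← hw]; ring
  have s2 : ¬ SocMod (Ideal.span {g} ⊔ Ideal.span {p₁}) := by
    intro h
    obtain ⟨v, hv, hm⟩ := soc_exchange _ g p₂ h2 rg1
      (fun u hu => (hp1.mem_or_mem hu).resolve_left hp2) h
    exact (hp12.mem_or_mem (hm _ h3)).elim hp3 hv
  have s3 : ¬ SocMod (Ideal.span {f} ⊔ Ideal.span {g}) := by
    intro h
    have := soc_exchange _ f p₁ h1 (swap _ _ hf rgf) (swap _ _ h0 rg1) h
    rw [sup_comm] at this
    exact s2 this
  -- P is a colon ideal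
  obtain ⟨u, hu⟩ : ∃ u, ∀ r, r ∈ P ↔ r * u ∈ Ideal.span {f} := by
    refine (assoc_form _ _ (Module.associatedPrimes.minimalPrimes_annihilator_subset_associatedPrimes R (R ⧸ Ideal.span {f}) ?_)).2
    rwa [Ideal.annihilator_quotient]
  have hgP : g ∉ P := by
    intro h
    have h5 := rgf _ ((hu g).1 h)
    exact hPp.ne_top ((Ideal.eq_top_iff_one _).2 ((hu 1).2 (by simpa using h5)))
  let N : Ideal R := Submodule.colon (Ideal.span {f}) (P : Set R)
  have hN : ∀ n, n ∈ N ↔ ∀ p ∈ P, n * p ∈ Ideal.span {f} := by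
    intro n
    exact Submodule.mem_colon
  obtain ⟨n, hnN, hn⟩ : ∃ n ∈ N, n ∉ Ideal.span {f} ⊔ Ideal.span {g} := by
    by_contra hcon
    push Not at hcon
    have hle : N ≤ Ideal.span {f} ⊔ Ideal.span {g} • N := by
      intro n hn
      obtain ⟨r, s, hs, hrs⟩ := Ideal.mem_span_singleton_sup.1 (hcon n hn)
      obtain ⟨s, rfl⟩ := Ideal.mem_span_singleton'.1 hs
      refine Ideal.mem_span_singleton_sup.2 ⟨r, s * g, ?_, hrs⟩
      rw [mul_comm]
      refine Ideal.mul_mem_mul (Ideal.mem_span_singleton_self g) ((hN s).2 fun p hp => rgf _ ?_)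
      have h6 : g * (s * p) = n * p - r * p * f := by rw [← hrs]; ring
      rw [h6]
      exact Ideal.sub_mem _ ((hN n).1 hn p hp)
        (Ideal.mul_mem_left _ _ (Ideal.mem_span_singleton_self f))
    have hNf : N ≤ Ideal.span {f} := by
      refine Submodule.le_of_le_smul_of_le_jacobson_bot (IsNoetherian.noetherian N) ?_ hle
      rw [jacobson_eq_maximalIdeal _ bot_ne_top]
      exact (Ideal.span_singleton_le_iff_mem _).2 hgm
    have huN : u ∈ N := (hN u).2 fun p hp => by rw [mul_comm]; exact (hu p).1 hp
    exact hPp.ne_top ((Ideal.eq_top_iff_one _).2 ((hu 1).2 (by simpa using hNf huN)))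
  obtain ⟨Q, hQ, hQn⟩ := exists_assoc _ n hn
  have hQp := (assoc_form _ _ hQ).1
  refine ⟨Q, hQp, lt_of_le_of_ne ?_ ?_, lt_of_le_of_ne (le_maximalIdeal hQp.ne_top) ?_⟩
  · intro p hp
    refine hQn p (Ideal.mem_sup_left ?_)
    rw [mul_comm]; exact (hN n).1 hnN p hp
  · rintro rfl
    exact hgP (hQn g (Ideal.mem_sup_right
      (Ideal.mul_mem_right _ _ (Ideal.mem_span_singleton_self g))))
  · rintro rfl
    exact s3 (soc_of_assoc _ hQ)

/-- A noetherian local domain where each nonzero prime contains a fixed nonzero nonunit has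
dimension one. -/
lemma dim_one_of_forall {D : Type*} [CommRing D] [IsNoetherianRing D] [IsLocalRing D] [IsDomain D]
    (f : D) (hf0 : f ≠ 0) (hfm : f ∈ maximalIdeal D)
    (h : ∀ Q : Ideal D, Q.IsPrime → Q ≠ ⊥ → f ∈ Q) : ringKrullDim D = 1 := by
  have hmb : maximalIdeal D ≠ ⊥ := by
    intro hb; rw [hb] at hfm; exact hf0 (by simpa using hfm)
  have hle : (maximalIdeal D).height ≤ 1 := by
    by_contra hcon
    have hfin : (Ideal.span {f}).minimalPrimes.Finite :=
      Ideal.finite_minimalPrimes_of_isNoetherianRing D _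
    have hns : ¬ ((maximalIdeal D : Set D) ⊆ ⋃ i ∈ (Ideal.span {f}).minimalPrimes, (id i : Ideal D)) := by
      rw [Ideal.subset_union_prime_finite hfin (f := id) ⊥ ⊥ (fun i hi _ _ => hi.1.1)]
      rintro ⟨i, hi, hle⟩
      have hi' : maximalIdeal D = i := (maximalIdeal.isMaximal D).eq_of_le hi.1.1.ne_top hle
      subst hi'
      exact hcon (Ideal.height_le_one_of_isPrincipal_of_mem_minimalPrimes _ _ hi)
    obtain ⟨g, hgm, hg⟩ := Set.not_subset.1 hns
    simp only [Set.mem_iUnion, not_exists] at hg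
    obtain ⟨q, hq, hqm⟩ := Ideal.exists_minimalPrimes_le
      ((Ideal.span_singleton_le_iff_mem _).2 hgm : Ideal.span {g} ≤ maximalIdeal D)
    have hqp : q.IsPrime := hq.1.1
    have hgq : g ∈ q := hq.1.2 (Ideal.mem_span_singleton_self g)
    have hqh := Ideal.height_le_one_of_isPrincipal_of_mem_minimalPrimes _ _ hq
    have hg0 : g ≠ 0 := by
      rintro rfl
      obtain ⟨p, hp, -⟩ := Ideal.exists_minimalPrimes_le
        ((Ideal.span_singleton_le_iff_mem _).2 hfm : Ideal.span {f} ≤ maximalIdeal D)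
      exact hg p hp (zero_mem p)
    have hqb : q ≠ ⊥ := by rintro rfl; exact hg0 (by simpa using hgq)
    obtain ⟨p, hp, hpq⟩ := Ideal.exists_minimalPrimes_le
        ((Ideal.span_singleton_le_iff_mem _).2 (h q hqp hqb) : Ideal.span {f} ≤ q)
    have hpp : p.IsPrime := hp.1.1
    have hfp : f ∈ p := hp.1.2 (Ideal.mem_span_singleton_self f)
    have hpb : p ≠ ⊥ := by rintro rfl; exact hf0 (by simpa using hfp)
    have hne : p ≠ q := by rintro rfl; exact hg p hp hgq
    have e1 := Ideal.height_add_one_le_of_lt_of_isPrime (lt_of_le_of_ne hpq hne)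
    have e2 : p.height ≠ 0 := fun e => hpb (Ideal.height_eq_zero_iff_eq_bot.1 e)
    have e3 : 1 ≤ p.height := Order.one_le_iff_ne_zero.2 e2
    have e4 : (1 : ℕ∞) + 1 ≤ 1 := (add_le_add_left e3 1).trans (e1.trans hqh)
    exact absurd e4 (by decide)
  have hge : 1 ≤ (maximalIdeal D).height :=
    Order.one_le_iff_ne_zero.2 fun e => hmb (Ideal.height_eq_zero_iff_eq_bot.1 e)
  rw [← IsLocalRing.maximalIdeal_height_eq_ringKrullDim, le_antisymm hle hge]
  rfl

lemma exists_good {R : Type*} [CommRing R] [IsNoetherianRing R] [IsLocalRing R] [IsDomain R]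
    (P Q₁ : Ideal R) (hP : P.IsPrime) (hQ₁ : Q₁.IsPrime) (hlt : P < Q₁)
    (hlt' : Q₁ < maximalIdeal R) (g : R) (hg : g ∉ P) :
    ∃ Q : Ideal R, Q.IsPrime ∧ P < Q ∧ g ∉ Q ∧ ringKrullDim (R ⧸ Q) = 1 := by
  -- replace `g` by a nonunit
  wlog hgm : g ∈ maximalIdeal R generalizing g
  · obtain ⟨c, hc, hcP⟩ := SetLike.exists_of_lt (hlt.trans hlt')
    obtain ⟨Q, h1, h2, h3, h4⟩ := this c hcP hc
    exact ⟨Q, h1, h2, fun h => hgm (le_maximalIdeal h1.ne_top h), h4⟩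
  obtain ⟨Q, ⟨hQp, hPQ, hgQ⟩, hmax⟩ := set_has_maximal_iff_noetherian.mpr
    (inferInstance : IsNoetherian R R) {Q : Ideal R | Q.IsPrime ∧ P ≤ Q ∧ g ∉ Q} ⟨P, hP, le_rfl, hg⟩
  have hdim : ringKrullDim (R ⧸ Q) = 1 := by
    have : IsLocalRing (R ⧸ Q) :=
      IsLocalRing.of_surjective' (Ideal.Quotient.mk Q) Ideal.Quotient.mk_surjective
    refine dim_one_of_forall (Ideal.Quotient.mk Q g)
      (by rwa [Ne, Ideal.Quotient.eq_zero_iff_mem]) ?_ ?_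
    · intro hu
      have := IsLocalHom.of_surjective (Ideal.Quotient.mk Q) Ideal.Quotient.mk_surjective
      exact hgm (isUnit_of_map_unit (Ideal.Quotient.mk Q) g hu)
    · intro q hq hqb
      by_contra hcon
      have hle : Q ≤ q.comap (Ideal.Quotient.mk Q) := by
        intro x hx
        rw [Ideal.mem_comap, Ideal.Quotient.eq_zero_iff_mem.2 hx]; exact zero_mem _
      refine hmax (q.comap (Ideal.Quotient.mk Q)) ⟨Ideal.comap_isPrime _ _, hPQ.trans hle, hcon⟩
        (lt_of_le_of_ne hle fun e => hqb ?_)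
      rw [eq_bot_iff]
      intro y hy
      obtain ⟨x, rfl⟩ := Ideal.Quotient.mk_surjective y
      have : x ∈ Q := by rw [e]; exact hy
      exact Ideal.Quotient.eq_zero_iff_mem.2 this
  refine ⟨Q, hQp, lt_of_le_of_ne hPQ ?_, hgQ, hdim⟩
  rintro rfl
  have hk : Ring.KrullDimLE 1 (R ⧸ P) := by
    rw [Ring.krullDimLE_iff, hdim]; rfl
  have hk' := Ring.krullDimLE_one_iff_of_noZeroDivisors.1 hk (Q₁.map (Ideal.Quotient.mk P)) (by
    intro hb
    rw [Ideal.map_eq_bot_iff_le_ker, Ideal.mk_ker] at hb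
    exact hlt.not_ge hb) (Ideal.map_isPrime_of_surjective Ideal.Quotient.mk_surjective
      (by rw [Ideal.mk_ker]; exact hlt.le))
  have h7 : (Q₁.map (Ideal.Quotient.mk P)).comap (Ideal.Quotient.mk P) = Q₁ := by
    rw [Ideal.comap_map_of_surjective' _ Ideal.Quotient.mk_surjective, Ideal.mk_ker]
    exact sup_eq_left.2 hlt.le
  have h8 : Q₁.IsMaximal := by
    rw [← h7]
    exact Ideal.comap_isMaximal_of_surjective _ Ideal.Quotient.mk_surjective
  exact hlt'.ne (IsLocalRing.eq_maximalIdeal h8)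

end helpers

section powerseries
open MvPowerSeries

instance instDomainMvPS (σ : Type) : IsDomain (MvPowerSeries σ ℚ) := NoZeroDivisors.to_isDomain _

lemma X_ne_zero_aux {σ : Type} (i : σ) : (X i : MvPowerSeries σ ℚ) ≠ 0 := by
  classical
  intro h
  have := congrArg (coeff (Finsupp.single i 1)) h
  simp at this

lemma mem_span_pair_X {σ : Type} (i j : σ) (f : MvPowerSeries σ ℚ)
    (h : ∀ m : σ →₀ ℕ, m i = 0 → m j = 0 → coeff m f = 0) :
    f ∈ Ideal.span {(X i : MvPowerSeries σ ℚ), X j} := by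
  classical
  let f₁ : MvPowerSeries σ ℚ := fun m => if m i = 0 then 0 else coeff m f
  let f₂ : MvPowerSeries σ ℚ := fun m => if m i = 0 then coeff m f else 0
  have c1 : ∀ m, coeff m f₁ = if m i = 0 then 0 else coeff m f := fun m => rfl
  have c2 : ∀ m, coeff m f₂ = if m i = 0 then coeff m f else 0 := fun m => rfl
  have hf : f = f₁ + f₂ := by
    ext m
    rw [map_add, c1, c2]
    split_ifs <;> simp
  rw [hf]
  refine Ideal.add_mem _ ?_ ?_
  · refine Ideal.mem_of_dvd _ (X_dvd_iff.2 fun m hm => ?_) (Ideal.subset_span (by simp) : X i ∈ _)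
    rw [c1, if_pos hm]
  · refine Ideal.mem_of_dvd _ (X_dvd_iff.2 fun m hm => ?_) (Ideal.subset_span (by simp) : X j ∈ _)
    rw [c2]
    split_ifs with h'
    · exact h m h' hm
    · rfl

/-- Kill the variables `i` and `j`. -/
def killTwo {σ : Type} (i j : σ) :
    MvPowerSeries σ ℚ →+* MvPowerSeries {k : σ // k ≠ i ∧ k ≠ j} ℚ :=
  (killCompl (R := ℚ) (Function.Embedding.subtype (fun k : σ => k ≠ i ∧ k ≠ j))).toRingHom

lemma killTwo_surj {σ : Type} (i j : σ) : Function.Surjective (killTwo i j) := fun p =>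
  ⟨rename (Function.Embedding.subtype (fun k : σ => k ≠ i ∧ k ≠ j)) p, killCompl_rename_app p⟩

lemma killTwo_X {σ : Type} (i j k : σ) (h : k ≠ i ∧ k ≠ j) :
    killTwo i j (X k) = X ⟨k, h⟩ :=
  killCompl_X (R := ℚ) (e := Function.Embedding.subtype (fun k : σ => k ≠ i ∧ k ≠ j)) ⟨k, h⟩

lemma ker_killTwo {σ : Type} (i j : σ) :
    RingHom.ker (killTwo i j) = Ideal.span {(X i : MvPowerSeries σ ℚ), X j} := by
  classical
  apply le_antisymm
  · intro f hf
    refine mem_span_pair_X i j f fun m hi hj => ?_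
    rw [RingHom.mem_ker] at hf
    let x : {k : σ // k ≠ i ∧ k ≠ j} →₀ ℕ := m.subtypeDomain _
    have hx : Finsupp.embDomain (Function.Embedding.subtype (fun k : σ => k ≠ i ∧ k ≠ j)) x = m := by
      ext k
      by_cases hk : k ≠ i ∧ k ≠ j
      · exact Finsupp.embDomain_apply_self
          (Function.Embedding.subtype (fun k : σ => k ≠ i ∧ k ≠ j)) x ⟨k, hk⟩
      · rw [Finsupp.embDomain_of_notMem_range]
        · by_cases h : k = i
          · rw [h, hi]
          · have : k = j := by tauto
            rw [this, hj]
        · rintro ⟨k', rfl⟩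
          exact hk k'.2
    have := congrArg (coeff x) hf
    rw [← hx]
    exact this
  · rw [Ideal.span_le]
    rintro _ (rfl | rfl)
    · refine killCompl_X_eq_zero ?_
      rintro ⟨k, hk⟩
      exact k.2.1 hk
    · refine killCompl_X_eq_zero ?_
      rintro ⟨k, hk⟩
      exact k.2.2 hk

lemma span_pair_prime {σ : Type} (i j : σ) :
    (Ideal.span {(X i : MvPowerSeries σ ℚ), X j}).IsPrime := by
  rw [← ker_killTwo]
  exact RingHom.ker_isPrime _

lemma X_notMem_span {σ : Type} (i j k : σ) (h : k ≠ i ∧ k ≠ j) :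
    (X k : MvPowerSeries σ ℚ) ∉ Ideal.span {(X i : MvPowerSeries σ ℚ), X j} := by
  rw [← ker_killTwo, RingHom.mem_ker, killTwo_X i j k h]
  exact X_ne_zero_aux _

lemma X_mem_max {σ : Type} (i : σ) :
    (X i : MvPowerSeries σ ℚ) ∈ IsLocalRing.maximalIdeal (MvPowerSeries σ ℚ) := by
  rw [IsLocalRing.mem_maximalIdeal, mem_nonunits_iff, MvPowerSeries.isUnit_iff_constantCoeff]
  simp

/-- The main existence statement, pulled back along a surjection to a power series ring. -/
lemma exists_pullback {A : Type} [CommRing A] {σ : Type} [Finite σ] (i j k : σ) (hij : i ≠ j)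
    (hik : i ≠ k) (hjk : j ≠ k) (π : A →+* MvPowerSeries σ ℚ) (hπ : Function.Surjective π)
    (a : A) (ha : π a ≠ 0) (I : Ideal A) (hI : RingHom.ker π ≤ I)
    (hIa : I.map π = Ideal.span {π a}) (P : Ideal A) (hP : P ∈ I.minimalPrimes)
    (B : Ideal A) (hB : ¬ B ≤ P) :
    ∃ Q : Ideal A, Q.IsPrime ∧ P < Q ∧ RingHom.ker π ≤ Q ∧ ¬ B ≤ Q ∧ ringKrullDim (A ⧸ Q) = 1 := by
  have hPp : P.IsPrime := hP.1.1
  have hkP : RingHom.ker π ≤ P := hI.trans hP.1.2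
  have hcomap : (P.map π).comap π = P := by
    rw [Ideal.comap_map_of_surjective' _ hπ]
    exact sup_eq_left.2 hkP
  have hP'p : (P.map π).IsPrime := Ideal.map_isPrime_of_surjective hπ hkP
  have hP' : P.map π ∈ (Ideal.span {π a}).minimalPrimes := by
    rw [← hIa]
    refine ⟨⟨hP'p, Ideal.map_mono hP.1.2⟩, fun q hq hle => ?_⟩
    have h1 : P ≤ q.comap π := hP.2 ⟨Ideal.IsPrime.comap (hK := hq.1) π, Ideal.map_le_iff_le_comap.1 hq.2⟩
      (by rw [← hcomap]; exact Ideal.comap_mono hle)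
    exact Ideal.map_le_iff_le_comap.2 h1
  obtain ⟨b, hbB, hbP⟩ := SetLike.not_le_iff_exists.1 hB
  have e1 : (Ideal.span {(X i : MvPowerSeries σ ℚ), X i}) = Ideal.span {X i} := by simp
  have e2 : (Ideal.span {(X j : MvPowerSeries σ ℚ), X i}) = Ideal.span {X j} ⊔ Ideal.span {X i} := by
    rw [Ideal.span_insert]
  obtain ⟨Q₁, hQ₁, hl1, hl2⟩ := exists_prime_between (X i : MvPowerSeries σ ℚ) (X j) (X k)
    (X_mem_max i) (X_mem_max j) (X_mem_max k) (X_ne_zero_aux i)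
    (e1 ▸ span_pair_prime i i) (e1 ▸ X_notMem_span i i j ⟨hij.symm, hij.symm⟩)
    (e2 ▸ span_pair_prime j i) (e2 ▸ X_notMem_span j i k ⟨hjk.symm, hik.symm⟩) (π a) ha _ hP'
  obtain ⟨Q, hQ, hPQ, hbQ, hdim⟩ := exists_good _ Q₁ hP'p hQ₁ hl1 hl2 (π b) (fun h => hbP (by
    rw [← hcomap]; exact h))
  refine ⟨Q.comap π, Ideal.IsPrime.comap π, ?_, Ideal.comap_mono (f := π) bot_le, fun h => hbQ (h hbB), ?_⟩
  · refine lt_of_le_of_ne (Ideal.map_le_iff_le_comap.1 hPQ.le) ?_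
    rintro h
    refine hPQ.not_ge ?_
    rw [h, Ideal.map_comap_of_surjective _ hπ]
  · rw [← hdim]
    refine ringKrullDim_eq_of_ringEquiv ?_
    refine (Ideal.quotEquivOfEq ?_).trans
      (RingHom.quotientKerEquivOfSurjective (f := (Ideal.Quotient.mk Q).comp π)
        (Ideal.Quotient.mk_surjective.comp hπ))
    rw [← RingHom.comap_ker, Ideal.mk_ker]

lemma unique_min {A : Type} [CommRing A] (I J Q : Ideal A) (hIJ : I ⊓ J = ⊥) (hI : I.IsPrime)
    (hIQ : I ≤ Q) (hJQ : ¬ J ≤ Q) : ∃! p : Ideal A, p ∈ minimalPrimes A ∧ p ≤ Q := by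
  have key : ∀ p : Ideal A, p.IsPrime → p ≤ Q → I ≤ p := by
    intro p hp hpQ
    have : I ⊓ J ≤ p := by rw [hIJ]; exact bot_le
    exact (hp.inf_le.1 this).resolve_right fun h => hJQ (h.trans hpQ)
  refine ⟨I, ⟨⟨⟨hI, bot_le⟩, fun q hq hqI => key q hq.1 (hqI.trans hIQ)⟩, hIQ⟩, ?_⟩
  rintro p ⟨hp, hpQ⟩
  have h1 := key p hp.1.1 hpQ
  exact le_antisymm (hp.2 ⟨hI, bot_le⟩ h1) h1

lemma reg_notMem {A : Type} [CommRing A] (I J P : Ideal A) (hIJ : I ⊓ J = ⊥) (hJ : ¬ J ≤ P)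
    (a : A) (ha : a ∈ nonZeroDivisors A) : a ∉ I := by
  intro haI
  obtain ⟨b, hb, hbP⟩ := SetLike.not_le_iff_exists.1 hJ
  have h0 : a * b ∈ I ⊓ J := ⟨I.mul_mem_right _ haI, J.mul_mem_left _ hb⟩
  rw [hIJ] at h0
  have : b = 0 := (mul_left_mem_nonZeroDivisors_eq_zero_iff ha).1 (by simpa using h0)
  exact hbP (this ▸ zero_mem P)

/-- Combined statement for one of the two components. -/
lemma one_side (i j k₁ k₂ k₃ : Fin 5) (n1 : k₁ ≠ i ∧ k₁ ≠ j) (n2 : k₂ ≠ i ∧ k₂ ≠ j)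
    (n3 : k₃ ≠ i ∧ k₃ ≠ j) (h12 : k₁ ≠ k₂) (h13 : k₁ ≠ k₃) (h23 : k₂ ≠ k₃)
    (hK : K ≤ Ideal.span {V i, V j}) (B : Ideal T)
    (hB : Ideal.span {Ideal.Quotient.mk K (V i), Ideal.Quotient.mk K (V j)} ⊓ B = ⊥)
    (a : T) (ha : a ∈ nonZeroDivisors T) (P : Ideal T)
    (hP : P ∈ (Ideal.span {a, Ideal.Quotient.mk K (V i), Ideal.Quotient.mk K (V j)}).minimalPrimes)
    (hBP : ¬ B ≤ P) :
    ∃ Q : Ideal T, Q.IsPrime ∧ P < Q ∧ (∃! p : Ideal T, p ∈ minimalPrimes T ∧ p ≤ Q) ∧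
      ringKrullDim (T ⧸ Q) = 1 := by
  have hker : RingHom.ker (killTwo i j) = Ideal.span {V i, V j} := ker_killTwo i j
  let π : T →+* MvPowerSeries {k : Fin 5 // k ≠ i ∧ k ≠ j} ℚ :=
    Ideal.Quotient.lift K (killTwo i j) (fun x hx => by
      have h := hK hx
      rwa [← hker] at h)
  have hπm : ∀ x, π (Ideal.Quotient.mk K x) = killTwo i j x := fun x => rfl
  have hπ : Function.Surjective π := fun y => by
    obtain ⟨x, rfl⟩ := killTwo_surj i j y
    exact ⟨Ideal.Quotient.mk K x, rfl⟩
  have hkπ : RingHom.ker π = Ideal.span {Ideal.Quotient.mk K (V i), Ideal.Quotient.mk K (V j)} := by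
    have h1 : Ideal.span {Ideal.Quotient.mk K (V i), Ideal.Quotient.mk K (V j)} =
        (Ideal.span {V i, V j}).map (Ideal.Quotient.mk K) := by
      rw [Ideal.map_span, Set.image_pair]
    rw [h1, ← hker]
    ext y
    obtain ⟨x, rfl⟩ := Ideal.Quotient.mk_surjective y
    rw [RingHom.mem_ker, hπm]
    constructor
    · intro h
      exact Ideal.mem_map_of_mem _ h
    · intro h
      obtain ⟨x', hx', he⟩ := (Ideal.mem_map_iff_of_surjective _ Ideal.Quotient.mk_surjective).1 h
      rw [← hπm, ← he, hπm]
      exact hx'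
  have hprime : (RingHom.ker π).IsPrime := RingHom.ker_isPrime π
  rw [← hkπ] at hB
  have haI := reg_notMem _ B P hB hBP a ha
  have hsp : Ideal.span {a, Ideal.Quotient.mk K (V i), Ideal.Quotient.mk K (V j)} =
      Ideal.span {a} ⊔ RingHom.ker π := by
    rw [hkπ, Ideal.span_insert]
  rw [hsp] at hP
  obtain ⟨Q, hQ, hPQ, hkQ, hBQ, hdim⟩ := exists_pullback ⟨k₁, n1⟩ ⟨k₂, n2⟩ ⟨k₃, n3⟩
    (fun h => h12 (congrArg Subtype.val h)) (fun h => h13 (congrArg Subtype.val h))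
    (fun h => h23 (congrArg Subtype.val h)) π hπ a haI _ le_sup_right (by
      rw [Ideal.map_sup, Ideal.map_span, Set.image_singleton, sup_eq_left,
        Ideal.map_le_iff_le_comap]
      exact Ideal.comap_mono (f := π) bot_le) P hP B hBP
  exact ⟨Q, hQ, hPQ, unique_min _ B Q hB hprime hkQ hBQ, hdim⟩

lemma inf_T : Ideal.span {xT} ⊓ Ideal.span {yT, zT} = ⊥ := by
  have h1 : Ideal.span {xT} = (Ideal.span {V 0}).map (Ideal.Quotient.mk K) := by
    rw [Ideal.map_span, Set.image_singleton]; rfl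
  have h2 : Ideal.span {yT, zT} = (Ideal.span {V 1, V 2}).map (Ideal.Quotient.mk K) := by
    rw [Ideal.map_span, Set.image_pair]; rfl
  rw [eq_bot_iff]
  rintro y ⟨hy1, hy2⟩
  obtain ⟨x, rfl⟩ := Ideal.Quotient.mk_surjective y
  refine Ideal.Quotient.eq_zero_iff_mem.2 ⟨?_, ?_⟩
  · have h : x ∈ ((Ideal.span {V 0}).map (Ideal.Quotient.mk K)).comap (Ideal.Quotient.mk K) := by
      rw [← h1]; exact hy1
    rw [Ideal.comap_map_of_surjective' _ Ideal.Quotient.mk_surjective, Ideal.mk_ker,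
      sup_eq_left.2 (show K ≤ _ from inf_le_left)] at h
    exact h
  · have h : x ∈ ((Ideal.span {V 1, V 2}).map (Ideal.Quotient.mk K)).comap (Ideal.Quotient.mk K) := by
      rw [← h2]; exact hy2
    rw [Ideal.comap_map_of_surjective' _ Ideal.Quotient.mk_surjective, Ideal.mk_ker,
      sup_eq_left.2 (show K ≤ _ from inf_le_right)] at h
    exact h

end powerseries

/-- Lemma `findgoodQ`. -/
theorem statement_5 (a : T) (ha0 : a ≠ 0) (hareg : a ∈ nonZeroDivisors T)
    (P₁ : Ideal T) (hP₁ : P₁ ∈ (Ideal.span {a, xT}).minimalPrimes)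
    (hP₁yz : ¬ Ideal.span {yT, zT} ≤ P₁)
    (P₂ : Ideal T) (hP₂ : P₂ ∈ (Ideal.span {a, yT, zT}).minimalPrimes)
    (hP₂x : ¬ Ideal.span {xT} ≤ P₂) :
    ∃ Q₁ Q₂ : Ideal T, Q₁.IsPrime ∧ Q₂.IsPrime ∧
      P₁ < Q₁ ∧ P₂ < Q₂ ∧
      (∃! p : Ideal T, p ∈ minimalPrimes T ∧ p ≤ Q₁) ∧
      (∃! p : Ideal T, p ∈ minimalPrimes T ∧ p ≤ Q₂) ∧
      ringKrullDim (T ⧸ Q₁) = 1 ∧ ringKrullDim (T ⧸ Q₂) = 1 := by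
  have hx : Ideal.span {xT, xT} = Ideal.span {xT} := by simp
  obtain ⟨Q₁, a1, a2, a3, a4⟩ := one_side 0 0 1 2 3 (by decide) (by decide) (by decide)
    (by decide) (by decide) (by decide)
    (by rw [Set.pair_eq_singleton]; exact inf_le_left) (Ideal.span {yT, zT})
    (by rw [Set.pair_eq_singleton]; exact inf_T) a hareg P₁
    (by rw [Set.pair_eq_singleton]; exact hP₁) hP₁yz
  obtain ⟨Q₂, b1, b2, b3, b4⟩ := one_side 1 2 0 3 4 (by decide) (by decide) (by decide)
    (by decide) (by decide) (by decide)
    inf_le_right (Ideal.span {xT})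
    (by rw [inf_comm]; exact inf_T) a hareg P₂ hP₂ hP₂x
  exact ⟨Q₁, Q₂, a1, b1, a2, b2, a3, b3, a4, b4⟩

end
end

section
/- Let (R, R ∩ M) be a quasi-local subring of a complete Noetherian local ring (T, M) such that the composite map R → T → T/M² is surjective and IT ∩ R = I for every finitely generated ideal I of R. Then R is Noetherian and the natural homomorphism from the (R ∩ M)-adic completion of R to T is an isomorphism. -/
/-- Heitmann 1994, Proposition 1. -/
theorem statement_6 (T : Type*) [CommRing T] [IsNoetherianRing T] [IsLocalRing T]
    [IsAdicComplete (IsLocalRing.maximalIdeal T) T]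
    (R : Subring T) [IsLocalRing R]
    (hmax : IsLocalRing.maximalIdeal R = (IsLocalRing.maximalIdeal T).comap R.subtype)
    (hsurj : Function.Surjective
      ((Ideal.Quotient.mk ((IsLocalRing.maximalIdeal T) ^ 2)).comp R.subtype))
    (hcontract : ∀ I : Ideal R, I.FG → (I.map R.subtype).comap R.subtype = I) :
    IsNoetherianRing R ∧
    ∃ e : AdicCompletion (IsLocalRing.maximalIdeal R) R ≃+* T,
      ∀ r : R, e (algebraMap R (AdicCompletion (IsLocalRing.maximalIdeal R) R) r) = (r : T) := by
  have hnoeth : IsNoetherianRing R := by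
    refine ⟨fun I => ?_⟩
    have h1 : (Submodule.span T (R.subtype '' (I : Set R))).FG := IsNoetherian.noetherian _
    rw [Submodule.fg_span_iff_fg_span_finset_subset] at h1
    obtain ⟨s', hs', hspan⟩ := h1
    classical
    obtain ⟨s, hs, hs2⟩ := Finset.subset_set_image_iff.1 hs'
    have hJ : Ideal.map R.subtype (Ideal.span (s : Set R)) = Ideal.map R.subtype I := by
      rw [Ideal.map_span, Ideal.map]
      refine Eq.trans ?_ hspan.symm
      rw [← hs2, Finset.coe_image]
    have hle : I ≤ Ideal.span (s : Set R) := by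
      rw [← hcontract (Ideal.span (s : Set R)) ⟨s, rfl⟩, hJ]
      exact Ideal.le_comap_map
    have : I = Ideal.span (s : Set R) := le_antisymm hle (Ideal.span_le.2 hs)
    exact ⟨s, this.symm⟩
  refine ⟨hnoeth, ?_⟩
  set M := IsLocalRing.maximalIdeal T with hM
  set m := IsLocalRing.maximalIdeal R with hm
  have hs2 : ∀ t : T, ∃ r : R, t - r ∈ M ^ 2 := by
    intro t
    obtain ⟨r, hr⟩ := hsurj (Ideal.Quotient.mk _ t)
    exact ⟨r, (Ideal.Quotient.mk_eq_mk_iff_sub_mem _ _).1 hr.symm⟩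
  have hmapm : m.map R.subtype = M := by
    apply le_antisymm
    · rw [Ideal.map_le_iff_le_comap, ← hmax]
    · refine Submodule.le_of_le_smul_of_le_jacobson_bot (I := M) (IsNoetherian.noetherian _)
        (IsLocalRing.maximalIdeal_le_jacobson _) ?_
      intro t ht
      obtain ⟨r, hr⟩ := hs2 t
      have hrM : (r : T) ∈ M := by
        have := M.sub_mem ht (Ideal.pow_le_self two_ne_zero hr)
        simpa using this
      have hrm : r ∈ m := by rw [hmax]; exact hrM
      rw [← add_sub_cancel (r : T) t]
      refine Submodule.add_mem_sup (Ideal.mem_map_of_mem R.subtype hrm) ?_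
      rwa [smul_eq_mul, ← pow_two]
  have hmap : ∀ n, (m ^ n).map R.subtype = M ^ n := fun n => by rw [Ideal.map_pow, hmapm]
  have hcomap : ∀ n, (M ^ n).comap R.subtype = m ^ n := fun n => by
    rw [← hmap]; exact hcontract _ (IsNoetherian.noetherian _)
  have hstep : ∀ n, ∀ x ∈ M ^ n, ∃ r ∈ m ^ n, x - (r : T) ∈ M ^ (n + 1) := by
    intro n x hx
    rw [← hmap n, Ideal.map] at hx
    induction hx using Submodule.span_induction with
    | mem x h => obtain ⟨r, hr, rfl⟩ := h; exact ⟨r, hr, by simp⟩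
    | zero => exact ⟨0, zero_mem _, by simp⟩
    | add x y _ _ h1 h2 =>
      obtain ⟨r, hr, h1⟩ := h1
      obtain ⟨s, hs, h2⟩ := h2
      refine ⟨r + s, add_mem hr hs, ?_⟩
      convert add_mem h1 h2 using 1
      push_cast; ring
    | smul t x hx h =>
      obtain ⟨r, hr, h1⟩ := h
      obtain ⟨s, hs⟩ := hs2 t
      have hx' : x ∈ M ^ n := by rw [← hmap n]; exact hx
      refine ⟨s * r, Ideal.mul_mem_left _ _ hr, ?_⟩
      have h3 : (t - s) * x ∈ M ^ (n + 1) := by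
        rw [pow_succ']
        exact Ideal.mul_mem_mul (Ideal.pow_le_self two_ne_zero hs) hx'
      convert add_mem (Ideal.mul_mem_left _ (s : T) h1) h3 using 1
      push_cast; rw [smul_eq_mul]; ring
  have happ : ∀ n, ∀ t : T, ∃ r : R, t - (r : T) ∈ M ^ n := by
    intro n t
    induction n with
    | zero => exact ⟨0, by simp⟩
    | succ n ih =>
      obtain ⟨r, hr⟩ := ih
      obtain ⟨s, _, hs⟩ := hstep n _ hr
      refine ⟨r + s, ?_⟩
      convert hs using 1
      push_cast; ring
  let f : (n : ℕ) → AdicCompletion m R →+* T ⧸ M ^ n := fun n =>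
    (Ideal.quotientMap (M ^ n) R.subtype (hcomap n).ge).comp
      (AdicCompletion.evalₐ m n : AdicCompletion m R →+* R ⧸ m ^ n)
  have hfmk : ∀ n (x : AdicCompletion.AdicCauchySequence m R),
      f n (AdicCompletion.mk m R x) = Ideal.Quotient.mk (M ^ n) ((x.val n : R) : T) := by
    intro n x
    simp [f]
  have hf : ∀ {k n : ℕ} (hle : k ≤ n), (Ideal.Quotient.factorPow M hle).comp (f n) = f k := by
    intro k n hle
    ext x
    obtain ⟨x, rfl⟩ := AdicCompletion.mk_surjective m R x
    rw [RingHom.comp_apply, hfmk, hfmk]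
    change Ideal.Quotient.mk (M ^ k) _ = _
    rw [Ideal.Quotient.mk_eq_mk_iff_sub_mem]
    have := x.property hle
    rw [SModEq.sub_mem, smul_eq_mul, Ideal.mul_top, ← hcomap k] at this
    rw [← neg_mem_iff]
    simpa using this
  let F := IsAdicComplete.liftRingHom M f hf
  have hF : ∀ n x, Ideal.Quotient.mk (M ^ n) (F x) = f n x := fun n x =>
    IsAdicComplete.mk_liftRingHom M f hf n x
  have hext : ∀ t u : T, (∀ n, Ideal.Quotient.mk (M ^ n) t = Ideal.Quotient.mk (M ^ n) u) →
      t = u := by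
    intro t u h
    refine (IsHausdorff.eq_iff_smodEq (I := M)).2 fun n => ?_
    rw [SModEq.sub_mem, smul_eq_mul, Ideal.mul_top]
    exact (Ideal.Quotient.mk_eq_mk_iff_sub_mem _ _).1 (h n)
  have hbij : Function.Bijective F := by
    constructor
    · intro x y hxy
      refine AdicCompletion.ext_evalₐ fun n => ?_
      have h1 : f n x = f n y := by rw [← hF, ← hF, hxy]
      exact Ideal.quotientMap_injective' (H := (hcomap n).ge) (hcomap n).le h1
    · intro t
      choose r hr using fun n => happ n t
      refine ⟨AdicCompletion.mk m R (AdicCompletion.AdicCauchySequence.mk m R r ?_), ?_⟩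
      · intro n
        rw [SModEq.sub_mem, smul_eq_mul, Ideal.mul_top, ← hcomap n]
        have := sub_mem (Ideal.pow_le_pow_right n.le_succ (hr (n + 1))) (hr n)
        simpa using this
      · refine hext _ _ fun n => ?_
        rw [hF, hfmk, eq_comm, Ideal.Quotient.mk_eq_mk_iff_sub_mem]
        exact hr n
  refine ⟨RingEquiv.ofBijective F hbij, fun r => ?_⟩
  refine hext _ _ fun n => ?_
  change Ideal.Quotient.mk (M ^ n) (F _) = _
  rw [hF]
  simp [f]
end
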